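/- arXiv:0911.5472 — 2 statements merged into one kernel-verified Lean document; each statement's English description precedes it below -/
import Mathlib

section
/- Case C, p ≡ 3 (mod 8): Let N = 2^{r0} with r0 ≥ 3 and suppose p ≡ 3 (mod 8) (so that f = 2^{r0-2} = φ(N)/2). Then there exist ε ∈ {1, -1} and integers a, b with a² + 2b² = p such that G(χ) = ε · i√p · p^{2^{r0-3}-1} · (a + b √-2). -/
open Complex Polynomial IntermediateField

/-- The complex primitive `p`-th root of unity `exp(2πi/p)`. -/
noncomputable def zetaP (p : ℕ) : ℂ := Complex.exp (2 * Real.pi * Complex.I / p)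

/-- The Gauss sum `G(χ^λ) = ∑_{x ∈ F, x ≠ 0} χ^λ(x) ζ_p^{T(x)}`, where
`T` is the trace map from `F` down to `ZMod p`. -/
noncomputable def gaussSumN (p : ℕ) {F : Type} [Field F] [Fintype F] [Algebra (ZMod p) F]
    (χ : MulChar F ℂ) (lam : ℕ) : ℂ :=
  letI : DecidableEq F := Classical.decEq F
  ∑ x ∈ Finset.univ.filter (fun x : F => x ≠ 0),
    (χ ^ lam) x * zetaP p ^ (Algebra.trace (ZMod p) F x).val

/-- `√-m = i√m ∈ ℂ`. -/
noncomputable def sqrtNeg (m : ℕ) : ℂ := Real.sqrt m * Complex.I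

theorem sqrtNeg_sq (m : ℕ) : sqrtNeg m ^ 2 = -(m : ℂ) := by
  have h : ((Real.sqrt m : ℝ) : ℂ) ^ 2 = ((m : ℝ) : ℂ) := by
    rw [← Complex.ofReal_pow, Real.sq_sqrt (by positivity)]
  simp only [sqrtNeg, mul_pow, Complex.I_sq, h]
  push_cast
  ring

theorem isIntegral_sqrtNeg (m : ℕ) : IsIntegral ℚ (sqrtNeg m) := by
  refine ⟨X ^ 2 + C (m : ℚ), monic_X_pow_add_C _ (by norm_num), ?_⟩
  simp [sqrtNeg_sq]

/-- The class number `h(ℚ(√-m))` of the quadratic field `ℚ(√-m) ⊆ ℂ`. -/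
noncomputable def classNumSqrtNeg (m : ℕ) : ℕ :=
  haveI : FiniteDimensional ℚ ℚ⟮sqrtNeg m⟯ :=
    IntermediateField.adjoin.finiteDimensional (isIntegral_sqrtNeg m)
  haveI : CharZero ℚ⟮sqrtNeg m⟯ :=
    charZero_of_injective_algebraMap (algebraMap ℚ ℚ⟮sqrtNeg m⟯).injective
  haveI : NumberField ℚ⟮sqrtNeg m⟯ := ⟨⟩
  NumberField.classNumber ℚ⟮sqrtNeg m⟯

/-- `√p* = √p` if `p ≡ 1 (mod 4)` and `i√p` if `p ≡ 3 (mod 4)`. -/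
noncomputable def sqrtPStar (p : ℕ) : ℂ :=
  if p % 4 = 1 then (Real.sqrt p : ℂ) else (Real.sqrt p : ℂ) * Complex.I


lemma pow_form (p : ℕ) (hp8 : p % 8 = 3) (t : ℕ) :
    ∃ v, p ^ (2 ^ (t + 1)) = 1 + 2 ^ (t + 3) * (2 * v + 1) := by
  induction t with
  | zero =>
    obtain ⟨k, hk⟩ : ∃ k, p = 8 * k + 3 := ⟨p / 8, by omega⟩
    refine ⟨4 * k ^ 2 + 3 * k, ?_⟩
    subst hk; ring
  | succ t ih =>
    obtain ⟨v, hv⟩ := ih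
    refine ⟨v + 2 ^ (t + 1) * (2 * v + 1) ^ 2, ?_⟩
    rw [pow_succ 2 (t + 1), pow_mul, hv]
    ring

lemma order_eq (p : ℕ) (hp8 : p % 8 = 3) (n : ℕ) :
    orderOf (p : ZMod (2 ^ (n + 3))) = 2 ^ (n + 1) := by
  have : Fact (Nat.Prime 2) := ⟨Nat.prime_two⟩
  apply orderOf_eq_prime_pow
  · intro h
    have h1 : ((p ^ 2 ^ n : ℕ) : ZMod (2 ^ (n + 3))) = ((1 : ℕ) : ZMod (2 ^ (n + 3))) := by
      push_cast; exact h
    rw [ZMod.natCast_eq_natCast_iff] at h1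
    rcases n with _ | n
    · have := h1
      simp only [Nat.ModEq] at this
      norm_num at this; omega
    · obtain ⟨v, hv⟩ := pow_form p hp8 n
      rw [hv] at h1
      have h2 := (Nat.modEq_iff_dvd' (by omega)).1 h1.symm
      rw [Nat.add_sub_cancel_left, show n + 1 + 3 = (n + 3) + 1 by ring, pow_succ 2 (n + 3)] at h2
      have := Nat.dvd_of_mul_dvd_mul_left (by positivity) h2
      omega
  · obtain ⟨v, hv⟩ := pow_form p hp8 n
    have : ((p ^ 2 ^ (n + 1) : ℕ) : ZMod (2 ^ (n + 3))) = 1 := by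
      rw [hv]; push_cast
      have : ((2 ^ (n + 3) : ℕ) : ZMod (2 ^ (n + 3))) = 0 := ZMod.natCast_self _
      push_cast at this
      rw [this]; ring
    push_cast at this; exact this

lemma sum_shift (g : ℕ → ℂ) (F : ℕ) (hF : ∀ k, g (k + F) = g k) (j : ℕ) :
    ∑ k ∈ Finset.range F, g (k + j) = ∑ k ∈ Finset.range F, g k := by
  induction j with
  | zero => simp
  | succ j ih =>
    rw [← ih]
    have h1 := Finset.sum_range_succ (fun k => g (k + j)) F
    have h2 := Finset.sum_range_succ' (fun k => g (k + j)) F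
    have h3 : g (F + j) = g (0 + j) := by rw [add_comm F j, hF, zero_add]
    rw [h1] at h2
    simp only [h3] at h2
    have := add_right_cancel h2
    rw [this]
    refine Finset.sum_congr rfl fun k _ => ?_
    congr 1; ring

/-- In the group of units style: if `x ^ (2^(s+1))` first becomes one there, `x^(2^s) = -1`. -/
lemma half_neg_one (ω : ℂ) (s : ℕ) (h : orderOf ω = 2 ^ (s + 1)) : ω ^ (2 ^ s) = -1 := by
  have h1 : (ω ^ (2 ^ s)) ^ 2 = 1 := by
    rw [← pow_mul, ← pow_succ, ← h, pow_orderOf_eq_one]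
  rcases sq_eq_one_iff.1 h1 with h2 | h2
  · exfalso
    have := orderOf_dvd_of_pow_eq_one h2
    rw [h] at this
    have := Nat.le_of_dvd (by positivity) this
    rw [pow_succ] at this
    have : 0 < 2 ^ s := by positivity
    omega
  · exact h2

lemma psum (p : ℕ) (hp8 : p % 8 = 3) (n : ℕ) (ω : ℂ) (hω : ω ^ (2 ^ (n + 3)) = 1) :
    ∃ a b : ℤ, ∑ k ∈ Finset.range (2 ^ (n + 1)), ω ^ (p ^ k) = a + b * sqrtNeg 2 := by
  obtain ⟨k0, hk0⟩ : ∃ k, p = 8 * k + 3 := ⟨p / 8, by omega⟩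
  have hper : ∀ k, ω ^ (p ^ (k + 2 ^ (n + 1))) = ω ^ (p ^ k) := by
    intro k
    obtain ⟨v, hv⟩ := pow_form p hp8 n
    rw [pow_add p, hv, mul_add, mul_one, pow_add,
      show p ^ k * (2 ^ (n + 3) * (2 * v + 1)) = 2 ^ (n + 3) * (p ^ k * (2 * v + 1)) by ring,
      pow_mul, hω, one_pow, mul_one]
  have hpodd : ∀ k, Odd (p ^ k) := fun k => (Nat.odd_iff.2 (by omega)).pow
  have hzero : ∀ j, ω ^ (p ^ j) = -ω →
      ∃ a b : ℤ, ∑ k ∈ Finset.range (2 ^ (n + 1)), ω ^ (p ^ k) = a + b * sqrtNeg 2 := by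
    intro j hj
    refine ⟨0, 0, ?_⟩
    have h1 := sum_shift (fun k => ω ^ (p ^ k)) _ hper j
    have h2 : ∀ k, ω ^ (p ^ (k + j)) = - ω ^ (p ^ k) := by
      intro k
      rw [add_comm, pow_add, pow_mul, hj, (hpodd k).neg_pow]
    simp only [h2, Finset.sum_neg_distrib] at h1
    simp only [Int.cast_zero, zero_mul, add_zero]
    linear_combination (-1/2 : ℂ) * h1
  obtain ⟨s, hs, hs'⟩ := (Nat.dvd_prime_pow Nat.prime_two).1 (orderOf_dvd_of_pow_eq_one hω)
  match s, hs' with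
  | 0, hs' =>
    have : ω = 1 := by simpa using hs'
    exact ⟨2 ^ (n + 1), 0, by simp [this]⟩
  | 1, hs' =>
    have : ω = -1 := by simpa using half_neg_one ω 0 hs'
    exact ⟨- 2 ^ (n + 1), 0, by simp [this, (hpodd _).neg_one_pow]⟩
  | 2, hs' =>
    have h2 : ω ^ 2 = -1 := by simpa using half_neg_one ω 1 hs'
    apply hzero 1
    have h4 : ω ^ 4 = 1 := by linear_combination (ω ^ 2 - 1) * h2
    rw [hk0, pow_one, show 8 * k0 + 3 = 4 * (2 * k0) + 3 by ring, pow_add, pow_mul, h4, one_pow]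
    linear_combination ω * h2
  | 3, hs' =>
    have h4 : ω ^ 4 = -1 := by simpa using half_neg_one ω 2 hs'
    have h8 : ω ^ 8 = 1 := by linear_combination (ω ^ 4 - 1) * h4
    have hsq : (ω + ω ^ 3) ^ 2 = sqrtNeg 2 ^ 2 := by
      rw [sqrtNeg_sq]; push_cast; linear_combination (ω ^ 2 + 2) * h4
    have hpp : ω ^ p = ω ^ 3 := by
      rw [hk0, pow_add, pow_mul, h8, one_pow, one_mul]
    have hsum : ∀ h, ∑ k ∈ Finset.range (h * 2), ω ^ (p ^ k) = h * (ω + ω ^ 3) := by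
      intro h
      induction h with
      | zero => simp
      | succ h ih =>
        have e1 : ω ^ (p ^ (h * 2)) = ω := by
          have : p ^ (h * 2) = 8 * (p ^ (h * 2) / 8) + 1 := by
            have : p ^ (h * 2) % 8 = 1 := by
              rw [mul_comm, pow_mul, Nat.pow_mod, Nat.pow_mod p, hp8]; norm_num
            omega
          rw [this, pow_add, pow_mul, h8, one_pow, one_mul, pow_one]
        rw [add_mul, one_mul, show h * 2 + 2 = h * 2 + 1 + 1 by ring, Finset.sum_range_succ,
          Finset.sum_range_succ, ih, pow_succ p (h * 2), pow_mul ω, e1, hpp]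
        push_cast; ring
    rw [pow_succ 2 n, hsum]
    rcases sq_eq_sq_iff_eq_or_eq_neg.1 hsq with h | h
    · exact ⟨0, 2 ^ n, by rw [h]; push_cast; ring⟩
    · exact ⟨0, - 2 ^ n, by rw [h]; push_cast; ring⟩
  | (t + 4), hs' =>
    have h1 := half_neg_one ω (t + 3) hs'
    apply hzero (2 ^ (t + 1))
    obtain ⟨v, hv⟩ := pow_form p hp8 t
    rw [hv, pow_add, pow_mul, h1, pow_one, Odd.neg_one_pow ⟨v, rfl⟩]
    ring

section quad
variable {K : Type} [Field K] [Fintype K] [DecidableEq K]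

/-- complex valued quadratic character -/
noncomputable def qch (K : Type) [Field K] [Fintype K] [DecidableEq K] : MulChar K ℂ :=
  (quadraticChar K).ringHomComp (Int.castRingHom ℂ)

lemma qch_apply (x : K) : qch K x = ((quadraticChar K x : ℤ) : ℂ) := rfl

lemma qch_quadratic : (qch K).IsQuadratic := (quadraticChar_isQuadratic K).comp _

lemma qch_ne_one (hK : ringChar K ≠ 2) : qch K ≠ 1 :=
  (MulChar.ringHomComp_ne_one_iff (RingHom.injective_int _)).2 (quadraticChar_ne_one hK)

lemma quad_unique (ρ : MulChar K ℂ) (h2 : ρ ^ 2 = 1) (h1 : ρ ≠ 1) : ρ = qch K := by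
  have hsq : ∀ x : K, x ≠ 0 → IsSquare x → ρ x = 1 := by
    rintro x hx ⟨y, rfl⟩
    have hy : y ≠ 0 := by rintro rfl; simp at hx
    have := congrArg (fun r : MulChar K ℂ => r y) h2
    simp only [MulChar.pow_apply' _ two_ne_zero, MulChar.one_apply hy.isUnit] at this
    rw [map_mul, ← pow_two, this]
  have hv : ∀ x : K, x ≠ 0 → ρ x ^ 2 = 1 := by
    intro x hx
    rw [← map_pow]; exact hsq _ (pow_ne_zero _ hx) (IsSquare.sq x)
  have hns : ∀ x : K, x ≠ 0 → ¬ IsSquare x → ρ x = -1 := by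
    intro x hx hxs
    rcases sq_eq_one_iff.1 (hv x hx) with h | h
    · exfalso; apply h1
      ext u
      rw [MulChar.one_apply_coe]
      by_cases hu : IsSquare (u : K)
      · exact hsq _ u.ne_zero hu
      · have : IsSquare (x * u) := by
          have e1 := quadraticChar_neg_one_iff_not_isSquare.2 hxs
          have e2 := quadraticChar_neg_one_iff_not_isSquare.2 hu
          apply (quadraticChar_one_iff_isSquare (mul_ne_zero hx u.ne_zero)).1
          rw [map_mul, e1, e2]; norm_num
        have := hsq _ (mul_ne_zero hx u.ne_zero) this
        rwa [map_mul, h, one_mul] at this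
    · exact h
  ext u
  rw [qch_apply]
  by_cases hu : IsSquare (u : K)
  · rw [hsq _ u.ne_zero hu, (quadraticChar_one_iff_isSquare u.ne_zero).2 hu]; simp
  · rw [hns _ u.ne_zero hu, quadraticChar_neg_one_iff_not_isSquare.2 hu]; simp

lemma jacobi_dup (hK : ringChar K ≠ 2) (ρ : MulChar K ℂ) (h1 : ρ ≠ 1) :
    ρ 4 * jacobiSum ρ ρ = jacobiSum ρ (qch K) := by
  have h2 : (2 : K) ≠ 0 := Ring.two_ne_zero hK
  have e1 : ρ 4 * jacobiSum ρ ρ = ∑ y : K, ρ (1 - y ^ 2) := by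
    rw [jacobiSum, Finset.mul_sum]
    refine Fintype.sum_bijective (fun x : K => 2 * x - 1) ?_ _ _ ?_
    · refine Function.bijective_iff_has_inverse.2 ⟨fun y => (y + 1) / 2, ?_, ?_⟩
      · intro x; field_simp; ring
      · intro x; field_simp; ring
    · intro x
      rw [← map_mul, ← map_mul]; congr 1; ring
  have e2 : ∑ y : K, ρ (1 - y ^ 2) = ∑ v : K, ρ (1 - v) * (1 + qch K v) := by
    rw [← Finset.sum_fiberwise_of_maps_to (s := Finset.univ) (t := Finset.univ)
      (g := fun y : K => y ^ 2) (fun _ _ => Finset.mem_univ _)]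
    refine Finset.sum_congr rfl fun v _ => ?_
    have := quadraticChar_card_sqrts hK v
    have h3 : ({x : K | x ^ 2 = v}.toFinset) = Finset.univ.filter (fun y : K => y ^ 2 = v) := by
      ext; simp
    rw [h3] at this
    rw [Finset.sum_congr rfl (g := fun _ => ρ (1 - v))]
    · rw [Finset.sum_const, nsmul_eq_mul, mul_comm, qch_apply]
      congr 1
      have h4 := congrArg (fun z : ℤ => (z : ℂ)) this
      push_cast at h4
      rw [h4]; ring
    · intro y hy
      rw [(Finset.mem_filter.1 hy).2]
  rw [e1, e2, jacobiSum_comm, jacobiSum]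
  simp only [mul_add, mul_one, Finset.sum_add_distrib]
  have e3 : ∑ v : K, ρ (1 - v) = 0 := by
    rw [← MulChar.sum_eq_zero_of_ne_one h1]
    exact Fintype.sum_equiv (Equiv.subLeft 1) _ _ (fun x => rfl)
  rw [e3, zero_add]
  exact Finset.sum_congr rfl fun x _ => mul_comm _ _

end quad

section main
variable (p : ℕ) [Fact p.Prime] (F : Type) [Field F] [Fintype F] [Algebra (ZMod p) F]

noncomputable def psi : AddChar F ℂ :=
  (ZMod.stdAddChar (N := p)).compAddMonoidHom (Algebra.trace (ZMod p) F).toAddMonoidHom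

lemma psi_apply (x : F) : psi p F x = ZMod.stdAddChar (Algebra.trace (ZMod p) F x) := rfl

lemma charP_F : CharP F p :=
  charP_of_injective_algebraMap (algebraMap (ZMod p) F).injective p

lemma psi_prim : (psi p F).IsPrimitive := by
  apply AddChar.IsPrimitive.of_ne_one
  have : CharP F p := charP_F p F
  obtain ⟨x, hx⟩ := Algebra.trace_surjective (ZMod p) F 1
  intro h
  have h1 := congrArg (fun c : AddChar F ℂ => c x) h
  simp only [psi_apply, hx, AddChar.one_apply] at h1
  have h2 := (ZMod.injective_stdAddChar (N := p)) (h1.trans (AddChar.map_zero_eq_one _).symm)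
  exact one_ne_zero h2

variable {F}

lemma gaussSumN_eq (χ : MulChar F ℂ) : gaussSumN p χ 1 = gaussSum χ (psi p F) := by
  classical
  unfold gaussSumN gaussSum
  rw [Finset.sum_filter]
  refine Finset.sum_congr rfl fun x _ => ?_
  split_ifs with h
  · rw [pow_one, psi_apply]
    congr 1
    have := ZMod.stdAddChar_coe (N := p) ((Algebra.trace (ZMod p) F x).val : ℤ)
    rw [Int.cast_natCast, ZMod.natCast_zmod_val] at this
    rw [this, zetaP, ← Complex.exp_nat_mul]
    congr 1
    push_cast; ring
  · rw [not_not] at h; subst h; rw [MulChar.map_zero, zero_mul]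

lemma trace_frob (x : F) : Algebra.trace (ZMod p) F (x ^ p) = Algebra.trace (ZMod p) F x := by
  have : CharP F p := charP_F p F
  have h := Algebra.trace_eq_of_algEquiv (FiniteField.frobeniusAlgEquiv (ZMod p) F p) x
  rw [← h]; congr 1
  simp [ZMod.card]

lemma frob_bij : Function.Bijective (fun x : F => x ^ p) := by
  have : CharP F p := charP_F p F
  exact (PerfectRing.bijective_frobenius (R := F) (p := p))

lemma gauss_frob (χ : MulChar F ℂ) (k : ℕ) :
    gaussSum (χ ^ (p ^ k)) (psi p F) = gaussSum χ (psi p F) := by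
  induction k with
  | zero => simp
  | succ k ih =>
    rw [← ih, pow_succ, pow_mul]
    unfold gaussSum
    refine Fintype.sum_bijective (fun x : F => x ^ p) (frob_bij p) _ _ fun x => ?_
    rw [psi_apply, psi_apply, trace_frob, MulChar.pow_apply' _ (Fact.out : p.Prime).ne_zero,
      map_pow]

lemma char_integral (χ : MulChar F ℂ) (x : F) : IsIntegral ℤ (χ x) := by
  by_cases hx : x = 0
  · subst hx; rw [MulChar.map_zero]; exact isIntegral_zero
  · have h : χ x ^ (Fintype.card F - 1) = 1 := by
      rw [← map_pow, FiniteField.pow_card_sub_one_eq_one x hx, map_one]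
    have h0 : 0 < Fintype.card F - 1 := by
      have := Fintype.one_lt_card (α := F); omega
    exact IsIntegral.of_pow h0 (h ▸ isIntegral_one)

lemma gauss_integral (χ : MulChar F ℂ) : IsIntegral ℤ (gaussSum χ (psi p F)) := by
  refine IsIntegral.sum _ fun x _ => (char_integral χ x).mul ?_
  have h : psi p F x ^ p = 1 := by
    have : CharP F p := charP_F p F
    rw [← AddChar.map_nsmul_eq_pow]; simp
  exact IsIntegral.of_pow (Fact.out : p.Prime).pos (h ▸ isIntegral_one)

lemma gauss_pow (hp8 : p % 8 = 3) (n : ℕ) (hcard : Fintype.card F = p ^ (2 ^ (n + 1))) (s : ℕ) :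
    ∀ ρ : MulChar F ℂ, orderOf ρ = 2 ^ (s + 3) →
    ∃ w : ℂ, IsIntegral ℤ w ∧
      gaussSum ρ (psi p F) ^ (2 ^ s) = w * ((p : ℂ) ^ (2 ^ n)) ^ (2 ^ s - 1) := by
  classical
  have : CharP F p := charP_F p F
  have hK : ringChar F ≠ 2 := by
    rw [ringChar.eq F p]; rintro rfl; omega
  induction s with
  | zero =>
    intro ρ _
    exact ⟨_, gauss_integral p ρ, by simp⟩
  | succ s ih =>
    intro ρ hρ
    have hρ1 : ρ ≠ 1 := by
      rintro rfl; rw [orderOf_one] at hρ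
      have := Nat.one_lt_two_pow (n := s + 1 + 3) (by omega); omega
    have hρ2 : orderOf (ρ ^ 2) = 2 ^ (s + 3) := by
      rw [orderOf_pow' _ two_ne_zero, hρ, Nat.gcd_eq_right (dvd_pow_self 2 (by omega)),
        show s + 1 + 3 = s + 3 + 1 by ring, pow_succ, Nat.mul_div_cancel _ two_pos]
    have hρ21 : ρ * ρ ≠ 1 := by
      rw [← pow_two]; intro h; rw [h, orderOf_one] at hρ2
      have := Nat.one_lt_two_pow (n := s + 3) (by omega); omega
    have hη : ρ ^ (2 ^ (s + 3)) = qch F := by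
      apply quad_unique
      · rw [← pow_mul, ← pow_succ]
        exact orderOf_dvd_iff_pow_eq_one.1 (by rw [hρ, show s + 1 + 3 = s + 3 + 1 by ring])
      · intro h
        have := Nat.le_of_dvd (by positivity) (orderOf_dvd_of_pow_eq_one h)
        rw [hρ, show s + 1 + 3 = s + 3 + 1 by ring, pow_succ] at this
        have : 0 < 2 ^ (s + 3) := by positivity
        omega
    have hmul : ρ * qch F = ρ ^ (p ^ (2 ^ (s + 1))) := by
      obtain ⟨v, hv⟩ := pow_form p hp8 s
      rw [hv, pow_add, pow_one, pow_mul, hη]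
      congr 1
      rw [pow_add, pow_mul, (qch_quadratic (K := F)).sq_eq_one, one_pow, one_mul, pow_one]
    set G := gaussSum ρ (psi p F) with hG
    have hGη : gaussSum (ρ * qch F) (psi p F) = G := by rw [hmul, gauss_frob]
    have hcard0 : (Fintype.card F : ℂ) ≠ 0 := Nat.cast_ne_zero.2 Fintype.card_ne_zero
    have hG0 : G ≠ 0 := gaussSum_ne_zero_of_nontrivial hcard0 hρ1 (psi_prim p F)
    have hρη : ρ * qch F ≠ 1 := by
      intro h
      have h3 : ρ * ρ = 1 := by
        have h4 : ρ = (qch F)⁻¹ := eq_inv_of_mul_eq_one_left h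
        rw [(qch_quadratic (K := F)).inv] at h4
        rw [h4, ← pow_two, (qch_quadratic (K := F)).sq_eq_one]
      exact hρ21 h3
    have hJ1 := jacobiSum_mul_nontrivial hρ21 (psi p F)
    have hJ2 := jacobiSum_mul_nontrivial hρη (psi p F)
    rw [hGη] at hJ2
    have hJ3 : jacobiSum ρ (qch F) = gaussSum (qch F) (psi p F) := mul_left_cancel₀ hG0 hJ2
    have hJ4 := jacobi_dup hK ρ hρ1
    have hgη : gaussSum (qch F) (psi p F) ^ 2 = ((p : ℂ) ^ (2 ^ n)) ^ 2 := by
      have h1 : qch F (-1) = 1 := by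
        have : IsSquare (-1 : F) := by
          rw [FiniteField.isSquare_neg_one_iff, hcard]
          obtain ⟨v, hv⟩ := pow_form p hp8 n
          rw [hv, show 2 ^ (n + 3) = 4 * 2 ^ (n + 1) by ring, mul_assoc]
          omega
        rw [qch_apply, (quadraticChar_one_iff_isSquare (by simp)).2 this]; simp
      rw [gaussSum_sq (qch_ne_one hK) qch_quadratic (psi_prim p F), h1, hcard, ← pow_mul,
        ← pow_succ]
      push_cast; ring
    obtain ⟨ε, hε, hεQ⟩ : ∃ ε : ℂ, IsIntegral ℤ ε ∧
        gaussSum (qch F) (psi p F) = ε * (p : ℂ) ^ (2 ^ n) := by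
      rcases sq_eq_sq_iff_eq_or_eq_neg.1 hgη with h | h
      · exact ⟨1, isIntegral_one, by rw [h, one_mul]⟩
      · exact ⟨-1, isIntegral_one.neg, by rw [h]; ring⟩
    have h4 : ρ⁻¹ 4 * ρ 4 = 1 := by
      rw [← MulChar.mul_apply, inv_mul_cancel, MulChar.one_apply]
      have : (2 : F) ≠ 0 := Ring.two_ne_zero hK
      rw [show (4 : F) = 2 * 2 by norm_num]
      exact (mul_ne_zero this this).isUnit
    obtain ⟨w, hw, hw2⟩ := ih (ρ ^ 2) hρ2
    have key : G ^ 2 = ρ⁻¹ 4 * ε * (p : ℂ) ^ (2 ^ n) * gaussSum (ρ ^ 2) (psi p F) := by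
      rw [pow_two ρ, pow_two G, ← hJ1, mul_assoc (ρ⁻¹ 4), ← hεQ, ← hJ3, ← hJ4]
      linear_combination (-(gaussSum (ρ * ρ) (psi p F)) * jacobiSum ρ ρ) * h4
    refine ⟨(ρ⁻¹ 4 * ε) ^ (2 ^ s) * w, (((char_integral _ _).mul hε).pow _).mul hw, ?_⟩
    rw [pow_succ' 2 s, pow_mul, key, mul_pow, hw2, mul_pow (ρ⁻¹ 4 * ε)]
    have : 2 * 2 ^ s - 1 = 2 ^ s + (2 ^ s - 1) := by
      have : 0 < 2 ^ s := by positivity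
      omega
    rw [this, pow_add]; ring

lemma chi_neg_one (hp8 : p % 8 = 3) (n : ℕ) (hcard : Fintype.card F = p ^ (2 ^ (n + 1)))
    (χ : MulChar F ℂ) (hχ : orderOf χ = 2 ^ (n + 3)) : χ (-1) ≠ 1 := by
  intro h
  have : CharP F p := charP_F p F
  have hK : ringChar F ≠ 2 := by
    rw [ringChar.eq F p]; rintro rfl; omega
  obtain ⟨v, hv⟩ := pow_form p hp8 n
  have hc : Fintype.card F / 2 = 2 ^ (n + 2) * (2 * v + 1) := by
    rw [hcard, hv, pow_succ 2 (n + 2)]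
    rw [show 2 ^ (n + 2) * 2 * (2 * v + 1) = 2 * (2 ^ (n + 2) * (2 * v + 1)) by ring]; omega
  have h1 : χ ^ (Fintype.card F / 2) = 1 := by
    ext u
    rw [MulChar.pow_apply_coe, ← map_pow, MulChar.one_apply_coe]
    rcases FiniteField.pow_dichotomy hK u.ne_zero with h2 | h2
    · rw [h2, map_one]
    · rw [h2, h]
  have h2 := orderOf_dvd_of_pow_eq_one h1
  rw [hχ, hc, pow_succ 2 (n + 2)] at h2
  have := Nat.dvd_of_mul_dvd_mul_left (by positivity) h2
  omega

lemma chi_base (hp8 : p % 8 = 3) (n : ℕ) (hcard : Fintype.card F = p ^ (2 ^ (n + 1)))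
    (χ : MulChar F ℂ) (hχ : orderOf χ = 2 ^ (n + 3)) (c : ZMod p) :
    χ (algebraMap (ZMod p) F c) = qch (ZMod p) c := by
  let ρ : MulChar (ZMod p) ℂ :=
    { toMonoidHom := χ.toMonoidHom.comp (algebraMap (ZMod p) F).toMonoidHom
      map_nonunit' := by
        intro a ha
        have : a = 0 := by by_contra h; exact ha (Ne.isUnit h)
        subst this
        change χ (algebraMap (ZMod p) F 0) = 0
        rw [map_zero, MulChar.map_zero] }
  have hρ : ∀ c, ρ c = χ (algebraMap (ZMod p) F c) := fun c => rfl
  rw [← hρ]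
  congr 1
  apply quad_unique
  · ext u
    rw [MulChar.pow_apply_coe, MulChar.one_apply_coe, hρ]
    set x := algebraMap (ZMod p) F u with hx
    have hx0 : x ≠ 0 := by simp [hx]
    have h1 : χ x ^ (2 ^ (n + 3)) = 1 := by
      rw [← MulChar.pow_apply' _ (by positivity), ← hχ, pow_orderOf_eq_one,
        MulChar.one_apply hx0.isUnit]
    have h2 : χ x ^ (p - 1) = 1 := by
      rw [← map_pow, hx, ← map_pow, ZMod.pow_card_sub_one_eq_one u.ne_zero, map_one, map_one]
    have h3 : χ x ^ (Nat.gcd (2 ^ (n + 3)) (p - 1)) = 1 :=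
      orderOf_dvd_iff_pow_eq_one.1 (Nat.dvd_gcd (orderOf_dvd_of_pow_eq_one h1)
        (orderOf_dvd_of_pow_eq_one h2))
    have h4 : Nat.gcd (2 ^ (n + 3)) (p - 1) ∣ 2 := by
      obtain ⟨s, _, hs⟩ := (Nat.dvd_prime_pow Nat.prime_two).1
        (Nat.gcd_dvd_left (2 ^ (n + 3)) (p - 1))
      have hd := Nat.gcd_dvd_right (2 ^ (n + 3)) (p - 1)
      rw [hs] at hd ⊢
      match s, hd with
      | 0, _ => simp
      | 1, _ => simp
      | s + 2, hd =>
        rw [pow_add] at hd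
        have := dvd_of_mul_left_dvd hd
        omega
    obtain ⟨k, hk⟩ := h4
    rw [hk, pow_mul, h3, one_pow]
  · intro h
    apply chi_neg_one p hp8 n hcard χ hχ
    have := congrArg (fun r : MulChar (ZMod p) ℂ => r (-1)) h
    simp only [hρ] at this
    rw [MulChar.one_apply (by simp)] at this
    simpa using this

lemma gauss_factor (hp8 : p % 8 = 3) (n : ℕ) (hcard : Fintype.card F = p ^ (2 ^ (n + 1)))
    (χ : MulChar F ℂ) (hχ : orderOf χ = 2 ^ (n + 3)) :
    ((p : ℂ) - 1) * gaussSum χ (psi p F) =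
      gaussSum (qch (ZMod p)) (ZMod.stdAddChar (N := p)) *
        ∑ x : F, χ x * qch (ZMod p) (Algebra.trace (ZMod p) F x) := by
  have hprim : (ZMod.stdAddChar (N := p)).IsPrimitive := ZMod.isPrimitive_stdAddChar p
  have hK : ringChar (ZMod p) ≠ 2 := by
    rw [ZMod.ringChar_zmod_n]; rintro rfl; omega
  have h1 : ∀ u : (ZMod p)ˣ, gaussSum χ (psi p F) =
      ∑ x : F, χ x * (qch (ZMod p) u * ZMod.stdAddChar ((u : ZMod p) * Algebra.trace (ZMod p) F x)) := by
    intro u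
    unfold gaussSum
    symm
    have hu : algebraMap (ZMod p) F u ≠ 0 := by simp
    refine Fintype.sum_bijective (fun x : F => algebraMap (ZMod p) F u * x)
      (mulLeft_bijective₀ _ hu) _ _ fun x => ?_
    rw [psi_apply, map_mul χ, chi_base p hp8 n hcard χ hχ, ← Algebra.smul_def, map_smul, smul_eq_mul]
    ring
  have h2 : ∑ u : (ZMod p)ˣ, gaussSum χ (psi p F) = ((p : ℂ) - 1) * gaussSum χ (psi p F) := by
    rw [Finset.sum_const, Finset.card_univ, ZMod.card_units, nsmul_eq_mul,
      Nat.cast_sub (Fact.out : p.Prime).one_le, Nat.cast_one]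
  rw [← h2, Finset.sum_congr rfl (fun u _ => h1 u), Finset.sum_comm, Finset.mul_sum]
  refine Finset.sum_congr rfl fun x _ => ?_
  rw [← Finset.mul_sum]
  set t := Algebra.trace (ZMod p) F x
  have h3 : ∑ u : (ZMod p)ˣ, qch (ZMod p) u * ZMod.stdAddChar ((u : ZMod p) * t) =
      ∑ c : ZMod p, qch (ZMod p) c * ZMod.stdAddChar (c * t) := by
    let e : (ZMod p)ˣ ↪ ZMod p := ⟨Units.val, Units.val_injective⟩
    have h7 := Finset.sum_map Finset.univ e
      (fun c : ZMod p => qch (ZMod p) c * ZMod.stdAddChar (c * t))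
    refine h7.symm.trans (Finset.sum_subset (Finset.subset_univ _) ?_)
    intro c _ hc
    have : ¬ IsUnit c := fun ⟨u, hu⟩ =>
      hc (Finset.mem_map.2 ⟨u, Finset.mem_univ _, hu⟩)
    rw [MulChar.map_nonunit _ this, zero_mul]
  rw [h3]
  by_cases ht : t = 0
  · simp only [ht, mul_zero, AddChar.map_zero_eq_one, mul_one, MulChar.map_zero]
    rw [MulChar.sum_eq_zero_of_ne_one (qch_ne_one hK)]; ring
  · have h4 := gaussSum_mulShift (qch (ZMod p)) (ZMod.stdAddChar (N := p)) (Units.mk0 t ht)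
    have h5 : qch (ZMod p) t * qch (ZMod p) t = 1 := by
      rw [← pow_two, ← MulChar.pow_apply' _ two_ne_zero, qch_quadratic.sq_eq_one,
        MulChar.one_apply (Ne.isUnit ht)]
    have h6 : gaussSum (qch (ZMod p)) (AddChar.mulShift (ZMod.stdAddChar (N := p)) (Units.mk0 t ht))
      = ∑ c : ZMod p, qch (ZMod p) c * ZMod.stdAddChar (c * t) := by
      unfold gaussSum
      refine Finset.sum_congr rfl fun c _ => ?_
      rw [AddChar.mulShift_apply, Units.val_mk0, mul_comm c t]
    rw [h6, Units.val_mk0] at h4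
    rw [← h4]
    linear_combination (-(χ x) * ∑ c : ZMod p, qch (ZMod p) c * ZMod.stdAddChar (c * t)) * h5

lemma sum_form (hp8 : p % 8 = 3) (n : ℕ) 
    (χ : MulChar F ℂ) (hχ : orderOf χ = 2 ^ (n + 3)) :
    ∃ a b : ℚ, ∑ x : F, χ x * qch (ZMod p) (Algebra.trace (ZMod p) F x) =
      (a : ℂ) + b * sqrtNeg 2 := by
  have h1 : ∀ k, ∑ x : F, χ x ^ (p ^ k) * qch (ZMod p) (Algebra.trace (ZMod p) F x) =
      ∑ x : F, χ x * qch (ZMod p) (Algebra.trace (ZMod p) F x) := by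
    intro k
    induction k with
    | zero => simp
    | succ k ih =>
      rw [← ih]
      refine Fintype.sum_bijective (fun x : F => x ^ p) (frob_bij p) _ _ fun x => ?_
      rw [trace_frob, map_pow, ← pow_mul, pow_succ, mul_comm (p ^ k) p]
  have h2 : ∀ x : F, ∃ a b : ℤ, 
      ∑ k ∈ Finset.range (2 ^ (n + 1)), χ x ^ (p ^ k) = a + b * sqrtNeg 2 := by
    intro x
    by_cases hx : x = 0
    · refine ⟨0, 0, ?_⟩
      subst hx
      simp only [MulChar.map_zero]
      simp [(Fact.out : p.Prime).ne_zero]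
    · apply psum p hp8
      rw [← MulChar.pow_apply' _ (by positivity), ← hχ, pow_orderOf_eq_one,
        MulChar.one_apply (Ne.isUnit hx)]
  choose a b hab using h2
  have h3 : (2 ^ (n + 1) : ℂ) * ∑ x : F, χ x * qch (ZMod p) (Algebra.trace (ZMod p) F x) =
      ∑ x : F, (a x + b x * sqrtNeg 2) * qch (ZMod p) (Algebra.trace (ZMod p) F x) := by
    have : ∑ k ∈ Finset.range (2 ^ (n + 1)),
      ∑ x : F, χ x ^ (p ^ k) * qch (ZMod p) (Algebra.trace (ZMod p) F x) = 
      (2 ^ (n + 1) : ℂ) * ∑ x : F, χ x * qch (ZMod p) (Algebra.trace (ZMod p) F x) := by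
      rw [Finset.sum_congr rfl (fun k _ => h1 k), Finset.sum_const, Finset.card_range,
        nsmul_eq_mul]
      push_cast; rfl
    rw [← this, Finset.sum_comm]
    refine Finset.sum_congr rfl fun x _ => ?_
    rw [← Finset.sum_mul, hab]
  refine ⟨(∑ x : F, a x * quadraticChar (ZMod p) (Algebra.trace (ZMod p) F x) : ℤ) / 2 ^ (n + 1),
    (∑ x : F, b x * quadraticChar (ZMod p) (Algebra.trace (ZMod p) F x) : ℤ) / 2 ^ (n + 1), ?_⟩
  have h0 : (2 ^ (n + 1) : ℂ) ≠ 0 := pow_ne_zero _ two_ne_zero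
  apply mul_left_cancel₀ h0
  rw [h3]
  push_cast
  field_simp
  rw [Finset.mul_sum, ← Finset.sum_add_distrib]
  refine Finset.sum_congr rfl fun x _ => ?_
  rw [qch_apply]; ring

end main

lemma rat_lemma (p : ℕ) (hp : p.Prime) (x y : ℚ) (h : x ^ 2 + 2 * y ^ 2 = p)
    (hi : ∃ m : ℤ, 4 * p * x ^ 2 = m) : ∃ a b : ℤ, x = a ∧ y = b := by
  have intsq : ∀ (r : ℚ) (m : ℤ), r ^ 2 = m → ∃ k : ℤ, r = k := by
    intro r m hr
    have : IsIntegral ℤ r := IsIntegral.of_pow two_pos (by rw [hr]; exact isIntegral_algebraMap)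
    obtain ⟨k, hk⟩ := IsIntegrallyClosed.isIntegral_iff.1 this
    exact ⟨k, by simpa using hk.symm⟩
  have hp0 : (p : ℚ) ≠ 0 := by exact_mod_cast hp.ne_zero
  obtain ⟨m, hm⟩ := hi
  obtain ⟨k, hk⟩ := intsq (2 * p * x) (p * m) (by push_cast; rw [← hm]; ring)
  have hk2 : k ^ 2 = p * m := by
    have : (k : ℚ) ^ 2 = p * m := by rw [← hk, ← hm]; ring
    exact_mod_cast this
  obtain ⟨N, hN⟩ : (p : ℤ) ∣ k :=
    (Nat.prime_iff_prime_int.1 hp).dvd_of_dvd_pow (hk2 ▸ dvd_mul_right _ _)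
  have hx : 2 * x = N := by
    rw [hN] at hk; push_cast at hk
    apply mul_left_cancel₀ hp0; linarith
  obtain ⟨l, hl⟩ := intsq (4 * y) (8 * p - 2 * N ^ 2) (by push_cast; rw [← hx, ← h]; ring)
  have hl2 : l ^ 2 = 8 * p - 2 * N ^ 2 := by
    have : (l : ℚ) ^ 2 = 8 * p - 2 * N ^ 2 := by rw [← hl, ← hx, ← h]; ring
    exact_mod_cast this
  have two_dvd : ∀ z : ℤ, 2 ∣ z ^ 2 → 2 ∣ z := fun z hz => Int.prime_two.dvd_of_dvd_pow hz
  obtain ⟨l1, rfl⟩ := two_dvd l ⟨4 * p - N ^ 2, by rw [hl2]; ring⟩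
  obtain ⟨N1, rfl⟩ := two_dvd N ⟨2 * p - l1 ^ 2, by linarith⟩
  obtain ⟨l2, rfl⟩ := two_dvd l1 ⟨p - N1 ^ 2, by linarith⟩
  refine ⟨N1, l2, ?_, ?_⟩
  · push_cast at hx; linarith
  · push_cast at hl; linarith

theorem statement6 (p r0 N f : ℕ) (hp : p.Prime) (hr0 : 3 ≤ r0) (hN : N = 2 ^ r0)
    (hp8 : p % 8 = 3) (hNp : Nat.gcd N p = 1)
    (hf : orderOf (p : ZMod N) = f)
    (F : Type) [Field F] [Fintype F] [Algebra (ZMod p) F]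
    (hcard : Fintype.card F = p ^ f)
    (χ : MulChar F ℂ) (hχord : orderOf χ = N) :
    ∃ ε : ℂ, (ε = 1 ∨ ε = -1) ∧
      ∃ a b : ℤ, a ^ 2 + 2 * b ^ 2 = (p : ℤ) ∧
        gaussSumN p χ 1 =
          ε * (Complex.I * (Real.sqrt p : ℂ)) * (p : ℂ) ^ ((2 ^ (r0 - 3) - 1 : ℕ)) *
            ((a : ℂ) + (b : ℂ) * sqrtNeg 2) := by
  subst hN
  obtain ⟨n, rfl⟩ : ∃ n, r0 = n + 3 := ⟨r0 - 3, by omega⟩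
  have : Fact p.Prime := ⟨hp⟩
  rw [order_eq p hp8 n] at hf
  subst hf
  rw [Nat.add_sub_cancel, gaussSumN_eq p χ]
  have hK : ringChar (ZMod p) ≠ 2 := by
    rw [ZMod.ringChar_zmod_n]; rintro rfl; omega
  have hp0 : (p : ℂ) ≠ 0 := by exact_mod_cast hp.ne_zero
  have hp1 : (p : ℂ) - 1 ≠ 0 := by
    rw [sub_ne_zero]; exact_mod_cast hp.one_lt.ne'
  have hI : (Complex.I * (Real.sqrt p : ℂ)) ^ 2 = -p := by
    rw [mul_pow, Complex.I_sq, ← Complex.ofReal_pow, Real.sq_sqrt (by positivity)]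
    push_cast; ring
  have hg : gaussSum (qch (ZMod p)) (ZMod.stdAddChar (N := p)) ^ 2 =
      (Complex.I * (Real.sqrt p : ℂ)) ^ 2 := by
    have h1 : qch (ZMod p) (-1) = -1 := by
      have : ¬ IsSquare (-1 : ZMod p) := by
        rw [FiniteField.isSquare_neg_one_iff, ZMod.card]; omega
      rw [qch_apply, quadraticChar_neg_one_iff_not_isSquare.2 this]; simp
    rw [gaussSum_sq (qch_ne_one hK) qch_quadratic (ZMod.isPrimitive_stdAddChar p), h1, hI,
      ZMod.card]
    ring
  obtain ⟨ε, hε, hgε⟩ : ∃ ε : ℂ, (ε = 1 ∨ ε = -1) ∧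
      gaussSum (qch (ZMod p)) (ZMod.stdAddChar (N := p)) =
        ε * (Complex.I * (Real.sqrt p : ℂ)) := by
    rcases sq_eq_sq_iff_eq_or_eq_neg.1 hg with h | h
    · exact ⟨1, Or.inl rfl, by rw [h, one_mul]⟩
    · exact ⟨-1, Or.inr rfl, by rw [h]; ring⟩
  have hε2 : ε ^ 2 = 1 := by rcases hε with h | h <;> rw [h] <;> norm_num
  have hεc : (starRingEnd ℂ) ε = ε := by rcases hε with h | h <;> rw [h] <;> simp
  obtain ⟨a, b, hab⟩ := sum_form p hp8 n χ hχord
  have hfac := gauss_factor p hp8 n hcard χ hχord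
  rw [hab, hgε] at hfac
  set G := gaussSum χ (psi p F) with hG
  set P : ℂ := (p : ℂ) ^ (2 ^ n - 1) with hP
  have hP0 : P ≠ 0 := pow_ne_zero _ hp0
  have hPQ : (p : ℂ) ^ (2 ^ n) = P * p := by
    rw [hP, ← pow_succ, Nat.sub_add_cancel Nat.one_le_two_pow]
  set s := sqrtNeg 2 with hs
  have hs2 : s ^ 2 = -2 := by rw [hs, sqrtNeg_sq]; push_cast; rfl
  have hsc : (starRingEnd ℂ) s = -s := by
    rw [hs, sqrtNeg, map_mul, Complex.conj_ofReal, Complex.conj_I]; ring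
  obtain ⟨x, y, hxy⟩ : ∃ x y : ℚ,
      G = ε * (Complex.I * (Real.sqrt p : ℂ)) * P * ((x : ℂ) + y * s) := by
    refine ⟨a / ((p - 1) * p ^ (2 ^ n - 1)), b / ((p - 1) * p ^ (2 ^ n - 1)), ?_⟩
    apply mul_left_cancel₀ hp1
    rw [hfac]
    push_cast
    rw [← hP]
    field_simp
  set K := ε * (Complex.I * (Real.sqrt p : ℂ)) * ((x : ℂ) + y * s) with hKd
  have hGK : G = K * P := by rw [hxy, hKd]; ring
  have hKint : IsIntegral ℤ K := by
    obtain ⟨w, hw, hw2⟩ := gauss_pow p hp8 n hcard n χ hχord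
    have : K ^ (2 ^ n) = w := by
      rw [← hG, hGK, mul_pow, ← pow_mul (p : ℂ) (2 ^ n) (2 ^ n - 1), mul_comm (2 ^ n) (2 ^ n - 1), pow_mul _ (2 ^ n - 1), ← hP] at hw2
      exact mul_right_cancel₀ (pow_ne_zero _ hP0) hw2
    exact IsIntegral.of_pow (n := 2 ^ n) (by positivity) (this ▸ hw)
  have hKc : (starRingEnd ℂ) K = ε * (-(Complex.I * (Real.sqrt p : ℂ))) * ((x : ℂ) - y * s) := by
    rw [hKd]
    simp only [map_mul, map_add, hεc, hsc, Complex.conj_I, Complex.conj_ofReal]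
    rw [show (starRingEnd ℂ) (x : ℂ) = x from map_ratCast _ _,
      show (starRingEnd ℂ) (y : ℂ) = y from map_ratCast _ _]
    ring
  have hχ1 : χ ≠ 1 := by
    rintro rfl; rw [orderOf_one] at hχord
    have := Nat.one_lt_two_pow (n := n + 3) (by omega); omega
  have hnorm := gaussSum_mul_gaussSum_eq_card hχ1 (psi_prim p F)
  have hPc : (starRingEnd ℂ) P = P := by rw [hP, map_pow, map_natCast]
  rw [← star_gaussSum_eq, ← hG, hcard, pow_succ 2 n, pow_mul, Nat.cast_pow, Nat.cast_pow, hPQ,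
    ← starRingEnd_apply, hGK, map_mul, hPc] at hnorm
  have hKK : K * (starRingEnd ℂ) K = (p : ℂ) ^ 2 := by
    apply mul_right_cancel₀ (pow_ne_zero 2 hP0)
    linear_combination hnorm
  have hxyp : x ^ 2 + 2 * y ^ 2 = (p : ℚ) := by
    have h1 : ((x : ℂ) ^ 2 + 2 * y ^ 2) = p := by
      apply mul_left_cancel₀ hp0
      rw [← pow_two, ← hKK, hKc, hKd]
      linear_combination ((x : ℂ) ^ 2 - y ^ 2 * s ^ 2) * ε ^ 2 * hI
        - (p : ℂ) * ((x : ℂ) ^ 2 - y ^ 2 * s ^ 2) * hε2 + p * y ^ 2 * hs2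
    exact_mod_cast h1
  have hint : ∃ m : ℤ, 4 * p * x ^ 2 = (m : ℚ) := by
    have h1 : IsIntegral ℤ ((starRingEnd ℂ) K) := map_isIntegral_int (starRingEnd ℂ) hKint
    have h2 : IsIntegral ℤ (2 * (p : ℂ) ^ 2 - (K ^ 2 + (starRingEnd ℂ) K ^ 2)) := by
      refine IsIntegral.sub ?_ ((hKint.pow 2).add (h1.pow 2))
      have : (2 * (p : ℂ) ^ 2) = algebraMap ℤ ℂ (2 * (p : ℤ) ^ 2) := by simp
      rw [this]; exact isIntegral_algebraMap
    have h3 : 2 * (p : ℂ) ^ 2 - (K ^ 2 + (starRingEnd ℂ) K ^ 2) =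
        algebraMap ℚ ℂ (4 * p * x ^ 2) := by
      have h4 : (x : ℂ) ^ 2 + 2 * y ^ 2 = p := by exact_mod_cast hxyp
      have h5 : K ^ 2 + (starRingEnd ℂ) K ^ 2 =
          ε ^ 2 * (Complex.I * (Real.sqrt p : ℂ)) ^ 2 * (2 * (x ^ 2 + y ^ 2 * s ^ 2)) := by
        rw [hKc, hKd]; ring
      rw [h5, hε2, hI, hs2]
      simp only [map_mul, map_pow, map_natCast, map_ofNat, eq_ratCast]
      linear_combination (-2 * (p : ℂ)) * h4
    rw [h3, isIntegral_algebraMap_iff (algebraMap ℚ ℂ).injective] at h2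
    obtain ⟨m, hm⟩ := IsIntegrallyClosed.isIntegral_iff.1 h2
    exact ⟨m, by simpa using hm.symm⟩
  obtain ⟨A, B, rfl, rfl⟩ := rat_lemma p hp x y hxyp hint
  refine ⟨ε, hε, A, B, by exact_mod_cast hxyp, ?_⟩
  rw [hxy]; push_cast; rfl
end

section
/- Case C, p ≡ 5 (mod 8): Let N = 2^{r0} with r0 ≥ 3 and suppose p ≡ 5 (mod 8) (so that f = 2^{r0-2} = φ(N)/2). Then there exist ε ∈ {1, -1} and integers a, b with a² + b² = p such that G(χ)² = ε · p^{2^{r0-2}-1} · √p · (a + b i). -/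
open Complex Polynomial IntermediateField

section aux
open Classical in
noncomputable def etaC (F : Type) [Field F] [Fintype F] : MulChar F ℂ :=
  (quadraticChar F).ringHomComp (Int.castRingHom ℂ)

variable {F : Type} [Field F] [Fintype F]

theorem sum_sq_eta (hF : ringChar F ≠ 2) (g : F → ℂ) :
    ∑ y : F, g (y ^ 2) = ∑ u : F, (etaC F u + 1) * g u := by
  classical
  rw [← Finset.sum_fiberwise (s := Finset.univ) (g := fun y : F => y ^ 2)]
  refine Finset.sum_congr rfl fun u _ => ?_
  rw [Finset.sum_congr rfl (g := fun _ => g u)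
    (fun y hy => by rw [(Finset.mem_filter.mp hy).2])]
  rw [Finset.sum_const, nsmul_eq_mul]
  congr 1
  have h := quadraticChar_card_sqrts hF u
  have h2 : ({x : F | x ^ 2 = u}.toFinset) = Finset.univ.filter (fun y : F => y ^ 2 = u) := by
    ext; simp
  rw [h2] at h
  have h3 := congrArg (fun z : ℤ => (z : ℂ)) h
  simp only [Int.cast_natCast, Int.cast_add, Int.cast_one] at h3
  rw [h3]
  simp only [etaC, MulChar.ringHomComp_apply]
  congr 2

theorem etaC_ne_one (hF : ringChar F ≠ 2) : etaC F ≠ 1 := by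
  classical
  unfold etaC
  rw [MulChar.ringHomComp_ne_one_iff (Int.cast_injective)]
  exact quadraticChar_ne_one hF

theorem etaC_quad : (etaC F).IsQuadratic := by
  classical
  exact MulChar.IsQuadratic.comp (quadraticChar_isQuadratic F) _

theorem eq_etaC (hF : ringChar F ≠ 2) (φ : MulChar F ℂ) (h1 : φ ≠ 1) (h2 : φ ^ 2 = 1) :
    φ = etaC F := by
  obtain ⟨g, hg⟩ := IsCyclic.exists_generator (α := Fˣ)
  have key : ∀ χ : MulChar F ℂ, χ ≠ 1 → χ ^ 2 = 1 → χ g = -1 := by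
    intro χ h1 h2
    have h3 : χ g ^ 2 = 1 := by
      rw [← MulChar.pow_apply_coe, h2, MulChar.one_apply_coe]
    rcases sq_eq_one_iff.mp h3 with h | h
    · exact absurd ((MulChar.eq_iff hg χ 1).mpr (by rw [h, MulChar.one_apply_coe])) h1
    · exact h
  rw [MulChar.eq_iff hg, key φ h1 h2, key _ (etaC_ne_one hF) etaC_quad.sq_eq_one]

theorem two_ne_zero_of {F : Type} [Field F] (hF : ringChar F ≠ 2) : (2 : F) ≠ 0 := Ring.two_ne_zero hF

theorem jacobi_dup_s7 (hF : ringChar F ≠ 2) (χ : MulChar F ℂ) (hχ : χ ≠ 1) :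
    jacobiSum χ χ * χ 4 = jacobiSum χ (etaC F) := by
  have h2 := two_ne_zero_of hF
  rw [jacobiSum_comm χ (etaC F)]
  unfold jacobiSum
  rw [Finset.sum_mul]
  have e1 : ∑ x : F, χ x * χ (1 - x) * χ 4 = ∑ y : F, χ (1 - y ^ 2) := by
    refine Fintype.sum_bijective (fun x : F => 1 - 2 * x) ?_ _ _ ?_
    · refine (Finite.injective_iff_bijective).mp fun a b h => ?_
      have : 2 * a = 2 * b := by simpa using h
      exact mul_left_cancel₀ h2 this
    · intro x
      rw [← map_mul, ← map_mul]; congr 1; ring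
  rw [e1, sum_sq_eta hF (fun u => χ (1 - u))]
  simp only [add_mul, one_mul, Finset.sum_add_distrib]
  have : ∑ x : F, χ (1 - x) = 0 := by
    rw [← MulChar.sum_eq_zero_of_ne_one hχ]
    exact (Equiv.subLeft (1 : F)).sum_comp (fun x => χ x)
  rw [this, add_zero]

theorem gauss_dup (hF : ringChar F ≠ 2) (χ : MulChar F ℂ) (h1 : χ ≠ 1) (h2 : χ ^ 2 ≠ 1)
    (h3 : χ * etaC F ≠ 1) (ψ : AddChar F ℂ) (hψ : ψ.IsPrimitive)
    (h4 : gaussSum (χ * etaC F) ψ = gaussSum χ ψ) :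
    gaussSum χ ψ ^ 2 * χ 4 = gaussSum (χ ^ 2) ψ * gaussSum (etaC F) ψ := by
  have hne : gaussSum χ ψ ≠ 0 :=
    gaussSum_ne_zero_of_nontrivial (by simp) h1 hψ
  have a1 := jacobiSum_mul_nontrivial (χ := χ) (φ := χ) (by rwa [← pow_two]) ψ
  have a2 := jacobiSum_mul_nontrivial h3 ψ
  rw [h4] at a2
  have a3 := mul_left_cancel₀ hne a2
  rw [pow_two, ← a1, mul_assoc, jacobi_dup_s7 hF χ h1, a3, pow_two]

theorem HD {K : Type} [Field K] [Fintype K] [Algebra K F] (hK : ringChar K ≠ 2)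
    (hc : Fintype.card F = Fintype.card K ^ 2)
    (χ' : MulChar K ℂ) (h1 : χ' ≠ 1) (θ : MulChar F ℂ)
    (hθ : ∀ (x : F) (n : K), algebraMap K F n = x ^ (Fintype.card K + 1) → θ x = χ' n)
    (ψ : AddChar K ℂ) (Ψ : AddChar F ℂ) (hΨ : ∀ x, Ψ x = ψ (Algebra.trace K F x)) :
    gaussSum θ Ψ = - gaussSum χ' ψ ^ 2 := by
  classical
  have h2 := two_ne_zero_of hK
  have hodd := Nat.odd_iff.mpr (FiniteField.odd_card_of_char_ne_two hK)
  obtain ⟨d, hd⟩ := FiniteField.exists_nonsquare hK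
  have hd0 : d ≠ 0 := by rintro rfl; exact hd (IsSquare.zero)
  have hinj := (algebraMap K F).injective
  have hcF : ringChar F ≠ 2 := by
    rw [← Algebra.ringChar_eq K F]; exact hK
  have hdp : d ^ (Fintype.card K / 2) = -1 := by
    rcases FiniteField.pow_dichotomy hK hd0 with h | h
    · exact absurd ((FiniteField.isSquare_iff hK hd0).mpr h) hd
    · exact h
  obtain ⟨m, hm⟩ := hodd
  have hm2 : Fintype.card K / 2 = m := by omega
  rw [hm2] at hdp
  obtain ⟨s, hs⟩ : IsSquare (algebraMap K F d) := by
    rw [FiniteField.isSquare_iff hcF (by simpa using hd0)]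
    have : Fintype.card F / 2 = m * (2 * (m + 1)) := by
      rw [hc, hm, show (2 * m + 1) ^ 2 = 2 * (m * (2 * (m+1))) + 1 by ring]; omega
    rw [this, pow_mul, ← map_pow, hdp, map_neg, map_one, pow_mul]; simp
  have hsQ : s ^ Fintype.card K = - s := by
    rw [hm, pow_succ, pow_mul, pow_two, ← hs, ← map_pow, hdp]; simp
  have hKpow : ∀ u : K, (algebraMap K F u) ^ Fintype.card K = algebraMap K F u := by
    intro u; rw [← map_pow, FiniteField.pow_card]
  have hfrob : ∀ u v : K, (algebraMap K F u + algebraMap K F v * s) ^ Fintype.card K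
      = algebraMap K F u - algebraMap K F v * s := by
    intro u v
    have := map_add (FiniteField.frobeniusAlgHom K F) (algebraMap K F u) (algebraMap K F v * s)
    simp only [FiniteField.frobeniusAlgHom_apply] at this
    rw [this, mul_pow, hKpow, hKpow, hsQ]; ring
  have hfr : Module.finrank K F = 2 := by
    have := Module.card_eq_pow_finrank (K := K) (V := F)
    rw [hc] at this
    exact (Nat.pow_right_injective (Fintype.one_lt_card (α := K)) this).symm
  have htr : ∀ u v : K, Algebra.trace K F (algebraMap K F u + algebraMap K F v * s) = 2 * u := by
    intro u v
    apply hinj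
    rw [FiniteField.algebraMap_trace_eq_sum_pow, hfr, Nat.card_eq_fintype_card]
    simp only [Finset.sum_range_succ, Finset.sum_range_zero, pow_zero, pow_one, hfrob]
    simp only [map_mul, map_ofNat]; ring
  have hnorm : ∀ u v : K, θ (algebraMap K F u + algebraMap K F v * s) = χ' (u ^ 2 - d * v ^ 2) := by
    intro u v
    apply hθ
    rw [pow_succ _ (Fintype.card K), hfrob]
    simp only [map_sub, map_mul, map_pow, hs]; ring
  have hbij : Function.Bijective
      (fun z : K × K => algebraMap K F z.1 + algebraMap K F z.2 * s) := by
    rw [Fintype.bijective_iff_injective_and_card]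
    refine ⟨?_, by rw [Fintype.card_prod, hc, pow_two]⟩
    rintro ⟨u, v⟩ ⟨u', v'⟩ h
    simp only at h
    have hb := congrArg (fun x => x ^ Fintype.card K) h
    simp only [hfrob] at hb
    have h2F : (2 : F) ≠ 0 := two_ne_zero_of hcF
    have hs0 : s ≠ 0 := by
      rintro rfl
      apply hd0
      apply hinj; simpa using hs
    have e1 : algebraMap K F u = algebraMap K F u' := by
      apply mul_left_cancel₀ h2F; linear_combination h + hb
    have e2 : algebraMap K F v = algebraMap K F v' := by
      apply mul_left_cancel₀ (mul_ne_zero h2F hs0); linear_combination h - hb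
    rw [hinj e1, hinj e2]
  have hG : gaussSum θ Ψ = ∑ u : K, ∑ v : K, χ' (u ^ 2 - d * v ^ 2) * ψ (2 * u) := by
    unfold gaussSum
    rw [← Fintype.sum_prod_type' (f := fun u v : K => χ' (u ^ 2 - d * v ^ 2) * ψ (2 * u))]
    symm
    refine Fintype.sum_bijective _ hbij _ _ ?_
    rintro ⟨u, v⟩
    simp only [hnorm, hΨ, htr]
  have hG' : gaussSum χ' ψ ^ 2 = ∑ u : K, ∑ v : K, χ' (u ^ 2 - v ^ 2) * ψ (2 * u) := by
    rw [pow_two]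
    unfold gaussSum
    rw [Finset.sum_mul_sum, ← Fintype.sum_prod_type', ← Fintype.sum_prod_type']
    symm
    refine Fintype.sum_bijective (fun z : K × K => (z.1 + z.2, z.1 - z.2)) ?_ _ _ ?_
    · refine (Finite.injective_iff_bijective).mp ?_
      rintro ⟨a, b⟩ ⟨a', b'⟩ h
      simp only [Prod.mk.injEq] at h
      obtain ⟨ha, hb⟩ := h
      have e1 : a = a' := by apply mul_left_cancel₀ h2; linear_combination ha + hb
      have e2 : b = b' := by apply mul_left_cancel₀ h2; linear_combination ha - hb
      rw [e1, e2]
    · rintro ⟨u, v⟩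
      simp only
      rw [show u ^ 2 - v ^ 2 = (u + v) * (u - v) by ring, show 2 * u = (u + v) + (u - v) by ring,
        map_mul, AddChar.map_add_eq_mul]
      ring
  rw [eq_neg_iff_add_eq_zero, hG, hG', ← Finset.sum_add_distrib]
  refine Finset.sum_eq_zero fun u _ => ?_
  rw [← Finset.sum_mul, ← Finset.sum_mul, ← add_mul]
  rw [sum_sq_eta hK (fun w => χ' (u ^ 2 - d * w)), sum_sq_eta hK (fun w => χ' (u ^ 2 - w))]
  have hs0 : ∑ w : K, χ' (u ^ 2 - w) = 0 := by
    rw [← MulChar.sum_eq_zero_of_ne_one h1]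
    exact (Equiv.subLeft (u ^ 2 : K)).sum_comp (fun x => χ' x)
  have hηd : etaC K d = -1 := by
    have := quadraticChar_neg_one_iff_not_isSquare.mpr hd
    simp only [etaC, MulChar.ringHomComp_apply]
    have h5 := congrArg (fun z : ℤ => (z : ℂ)) this
    simp only [eq_intCast]
    convert h5 using 1
    simp
  have hsub : ∑ w : K, (etaC K w + 1) * χ' (u ^ 2 - d * w)
      = ∑ w : K, (- etaC K w + 1) * χ' (u ^ 2 - w) := by
    refine Fintype.sum_bijective (fun w => d * w) (mulLeft_bijective₀ d hd0) _ _ ?_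
    intro w
    rw [map_mul, hηd]; ring
  rw [hsub, ← Finset.sum_add_distrib]
  have : ∀ w : K, (- etaC K w + 1) * χ' (u ^ 2 - w) + (etaC K w + 1) * χ' (u ^ 2 - w)
     = 2 * χ' (u ^ 2 - w) := by intro w; ring
  simp only [this]
  rw [← Finset.mul_sum, hs0]; ring


theorem unit_mul_gauss (u : ℂ) (hu : u ^ 4 = 1) (a b : ℤ) :
    ∃ a' b' : ℤ, a' ^ 2 + b' ^ 2 = a ^ 2 + b ^ 2 ∧
      (a' : ℂ) + b' * I = u * (a + b * I) := by
  have h : (u - 1) * (u + 1) * ((u - I) * (u + I)) = 0 := by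
    linear_combination hu + (1 - u ^ 2) * I_sq
  rcases mul_eq_zero.mp h with h | h <;> rcases mul_eq_zero.mp h with h | h
  · exact ⟨a, b, rfl, by rw [sub_eq_zero.mp h]; ring⟩
  · exact ⟨-a, -b, by ring, by rw [eq_neg_of_add_eq_zero_left h]; push_cast; ring⟩
  · exact ⟨-b, a, by ring, by
      rw [sub_eq_zero.mp h]; push_cast; linear_combination (-b : ℂ) * I_sq⟩
  · exact ⟨b, -a, by ring, by
      rw [eq_neg_of_add_eq_zero_left h]; push_cast; linear_combination (b : ℂ) * I_sq⟩

theorem order_p (p n : ℕ) (hp8 : p % 8 = 5) : orderOf (p : ZMod (2 ^ (n + 2))) = 2 ^ n := by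
  have h := ZMod.orderOf_one_add_four_mul ((p / 4 : ℕ) : ℤ)
    (by rw [Int.odd_iff]; omega) n
  rw [← h]
  congr 1
  have : p = 1 + 4 * (p / 4) := by omega
  conv_lhs => rw [this]
  rw [Int.cast_natCast]; push_cast; rfl

theorem dvd_iff_pow (p n k : ℕ) (hp : 0 < p) :
    n ∣ p ^ k - 1 ↔ (p : ZMod n) ^ k = 1 := by
  rw [← ZMod.natCast_eq_zero_iff, Nat.cast_sub (Nat.one_le_pow _ _ hp), sub_eq_zero]
  push_cast; rfl

theorem etaC_neg_one (h : Fintype.card F % 4 ≠ 3) : etaC F (-1) = 1 := by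
  obtain ⟨r, hr⟩ := FiniteField.isSquare_neg_one_iff.mpr h
  have hr0 : r ≠ 0 := by rintro rfl; simp at hr
  rw [hr, ← pow_two, map_pow]
  rw [← MulChar.pow_apply' _ two_ne_zero, (etaC_quad (F := F)).sq_eq_one]
  exact MulChar.one_apply (isUnit_iff_ne_zero.mpr hr0)

noncomputable def PsiF (p : ℕ) (ψ : AddChar (ZMod p) ℂ) (F : Type) [Field F]
    [Algebra (ZMod p) F] : AddChar F ℂ :=
  ψ.compAddMonoidHom (Algebra.trace (ZMod p) F).toAddMonoidHom

theorem PsiF_apply (p : ℕ) (ψ : AddChar (ZMod p) ℂ) (F : Type) [Field F]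
    [Algebra (ZMod p) F] (x : F) : PsiF p ψ F x = ψ (Algebra.trace (ZMod p) F x) := rfl

theorem PsiF_prim (p : ℕ) [Fact p.Prime] (ψ : AddChar (ZMod p) ℂ) (hψ : ψ ≠ 1)
    [Algebra (ZMod p) F] : (PsiF p ψ F).IsPrimitive := by
  apply AddChar.IsPrimitive.of_ne_one
  obtain ⟨y, hy⟩ := (AddChar.ne_one_iff).mp hψ
  obtain ⟨x, hx⟩ := Algebra.trace_surjective (ZMod p) F y
  exact AddChar.ne_one_iff.mpr ⟨x, by rwa [PsiF_apply, hx]⟩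

theorem ringChar_ne (p : ℕ) [Fact p.Prime] (hp8 : p % 8 = 5) (F : Type) [Field F]
    [Algebra (ZMod p) F] : ringChar F ≠ 2 := by
  have : CharP F p := charP_of_injective_algebraMap (algebraMap (ZMod p) F).injective p
  rw [ringChar.eq F p]; omega

theorem mem_adjoin_I (z : ℂ) (hz : z ∈ Algebra.adjoin ℤ {I}) :
    ∃ a b : ℤ, z = a + b * I := by
  induction hz using Algebra.adjoin_induction with
  | mem x hx => exact ⟨0, 1, by rw [Set.mem_singleton_iff.mp hx]; simp⟩
  | algebraMap r => exact ⟨r, 0, by simp⟩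
  | add x y _ _ hx hy =>
    obtain ⟨a, b, rfl⟩ := hx
    obtain ⟨c, d, rfl⟩ := hy
    exact ⟨a + c, b + d, by push_cast; ring⟩
  | mul x y _ _ hx hy =>
    obtain ⟨a, b, rfl⟩ := hx
    obtain ⟨c, d, rfl⟩ := hy
    exact ⟨a * c - b * d, a * d + b * c, by
      push_cast; linear_combination (b * d : ℂ) * I_sq⟩

theorem main_base (p : ℕ) [Fact p.Prime] (hp8 : p % 8 = 5) (ψ : AddChar (ZMod p) ℂ) (hψ : ψ ≠ 1)
    [Algebra (ZMod p) F] (hc : Fintype.card F = p) (χ : MulChar F ℂ) (hχ : orderOf χ = 4) :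
    ∃ a b : ℤ, a ^ 2 + b ^ 2 = (p : ℤ) ∧
      gaussSum χ (PsiF p ψ F) ^ 2 = (Real.sqrt p : ℂ) * (a + b * I) := by
  have hF := ringChar_ne p hp8 F
  have hprim := PsiF_prim (F := F) p ψ hψ
  have hχ4 : χ ^ 4 = 1 := by rw [← hχ]; exact pow_orderOf_eq_one χ
  have hχ1 : χ ≠ 1 := by rintro rfl; simp at hχ
  have hχ2 : χ ^ 2 ≠ 1 := by
    intro h
    have := orderOf_dvd_of_pow_eq_one h
    rw [hχ] at this; omega
  have hη : χ ^ 2 = etaC F := eq_etaC hF _ hχ2 (by rw [← pow_mul]; exact hχ4)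
  have hJ := jacobiSum_mul_nontrivial (χ := χ) (φ := χ) (by rwa [← pow_two]) (PsiF p ψ F)
  rw [← pow_two, ← pow_two, hη] at hJ
  obtain ⟨a, b, hab⟩ := mem_adjoin_I _
    (jacobiSum_mem_algebraAdjoin_of_pow_eq_one hχ4 hχ4 isPrimitiveRoot_I)
  have hnorm : a ^ 2 + b ^ 2 = (p : ℤ) := by
    have h1 := jacobiSum_mul_jacobiSum_inv (F := F) (F' := ℂ)
      (by rw [ringChar.eq_zero]; exact (CharP.ringChar_ne_zero_of_finite F).symm)
      hχ1 hχ1 (by rwa [← pow_two])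
    have h2 := jacobiSum_ringHomComp χ χ (starRingEnd ℂ)
    have h3 : χ.ringHomComp (starRingEnd ℂ) = χ⁻¹ := MulChar.star_eq_inv χ
    rw [h3] at h2
    rw [h2, hab, hc] at h1
    simp only [map_add, map_mul, conj_I, map_intCast] at h1
    have : ((a ^ 2 + b ^ 2 : ℤ) : ℂ) = ((p : ℤ) : ℂ) := by
      push_cast
      linear_combination h1 + (b : ℂ) ^ 2 * I_sq
    exact_mod_cast this
  have hsq : gaussSum (etaC F) (PsiF p ψ F) ^ 2 = (Real.sqrt p : ℂ) ^ 2 := by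
    rw [gaussSum_sq (etaC_ne_one hF) etaC_quad hprim, etaC_neg_one (by omega), hc, one_mul,
      ← ofReal_pow, Real.sq_sqrt (by positivity)]
    simp
  rw [hab] at hJ
  rcases sq_eq_sq_iff_eq_or_eq_neg.mp hsq with h | h
  · exact ⟨a, b, hnorm, by rw [← hJ, h]⟩
  · exact ⟨-a, -b, by rw [← hnorm]; ring, by rw [← hJ, h]; push_cast; ring⟩

noncomputable def resChar {K : Type} [Field K] [Algebra K F] (χ : MulChar F ℂ) : MulChar K ℂ :=
  MulChar.ofUnitHom (χ.toUnitHom.comp (Units.map (algebraMap K F : K →* F)))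

theorem resChar_apply {K : Type} [Field K] [Algebra K F] (χ : MulChar F ℂ) (c : K) :
    resChar χ c = χ (algebraMap K F c) := by
  by_cases h : c = 0
  · subst h; simp [MulChar.map_zero]
  · have := MulChar.ofUnitHom_coe (χ.toUnitHom.comp (Units.map (algebraMap K F : K →* F)))
      (Units.mk0 c h)
    rw [Units.val_mk0] at this
    rw [resChar, this]
    simp [MulChar.coe_toUnitHom]

theorem main_step (p : ℕ) [Fact p.Prime] (hp8 : p % 8 = 5) (ψ : AddChar (ZMod p) ℂ) (hψ : ψ ≠ 1)
    (n : ℕ) (F K : Type) [Field F] [Fintype F] [Field K] [Fintype K]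
    [Algebra (ZMod p) F] [Algebra (ZMod p) K] [Algebra K F] [IsScalarTower (ZMod p) K F]
    (hcK : Fintype.card K = p ^ 2 ^ n) (hcF : Fintype.card F = p ^ 2 ^ (n + 1))
    (ih : ∀ χ : MulChar K ℂ, orderOf χ = 2 ^ (n + 2) → ∃ a b : ℤ, a ^ 2 + b ^ 2 = (p : ℤ) ∧
      gaussSum χ (PsiF p ψ K) ^ 2 = (p : ℂ) ^ (2 ^ n - 1) * (Real.sqrt p : ℂ) * (a + b * I))
    (χ : MulChar F ℂ) (hχ : orderOf χ = 2 ^ (n + 3)) :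
    ∃ a b : ℤ, a ^ 2 + b ^ 2 = (p : ℤ) ∧
      gaussSum χ (PsiF p ψ F) ^ 2 =
        (p : ℂ) ^ (2 ^ (n + 1) - 1) * (Real.sqrt p : ℂ) * (a + b * I) := by
  have hp : p.Prime := Fact.out
  have hF := ringChar_ne p hp8 F
  have hK := ringChar_ne p hp8 K
  have hprim := PsiF_prim (F := F) p ψ hψ
  set Q := p ^ 2 ^ n with hQ
  have hQ1 : 1 ≤ Q := Nat.one_le_pow _ _ hp.pos
  have hcFQ : Fintype.card F = Q ^ 2 := by rw [hcF, hQ, ← pow_mul, ← pow_succ]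
  have hQ4 : Q % 4 = 1 := by
    rw [hQ, Nat.pow_mod, show p % 4 = 1 by omega]; simp
  have hdiv : 2 ^ (n + 2) ∣ Q - 1 := by
    rw [hQ, dvd_iff_pow _ _ _ hp.pos, ← order_p p n hp8]; exact pow_orderOf_eq_one _
  have hndiv : ¬ 2 ^ (n + 3) ∣ Q - 1 := by
    rw [hQ, dvd_iff_pow _ _ _ hp.pos]
    intro h
    have h1 := orderOf_dvd_of_pow_eq_one h
    rw [order_p p (n + 1) hp8] at h1
    have h2 := Nat.le_of_dvd (by positivity) h1
    rw [pow_succ] at h2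
    have : 0 < 2 ^ n := by positivity
    omega
  have hpow2 : 8 ∣ 2 ^ (n + 3) := ⟨2 ^ n, by ring⟩
  have hχne : ∀ k : ℕ, ¬ 2 ^ (n + 3) ∣ k → χ ^ k ≠ 1 := by
    intro k hk h
    exact hk (hχ ▸ orderOf_dvd_of_pow_eq_one h)
  have hχ1 : χ ≠ 1 := by
    have := hχne 1 (fun h => by have := hpow2.trans h; omega)
    rwa [pow_one] at this
  have hχ2 : χ ^ 2 ≠ 1 := hχne 2 (fun h => by have := hpow2.trans h; omega)
  have hη : χ ^ (Q - 1) = etaC F := by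
    apply eq_etaC hF _ (hχne _ hndiv)
    rw [← pow_mul, ← orderOf_dvd_iff_pow_eq_one, hχ]
    obtain ⟨c, hc⟩ := hdiv
    exact ⟨c, by rw [hc]; ring⟩
  have hχη : χ * etaC F = χ ^ Q := by
    rw [← hη, ← pow_succ']; congr 1; omega
  have hQ0 : Q ≠ 0 := by omega
  have h3 : χ * etaC F ≠ 1 := by
    rw [hχη]
    apply hχne
    intro h
    have := hpow2.trans h
    omega
  have htr : ∀ x : F, PsiF p ψ F x = PsiF p ψ K (Algebra.trace K F x) := by
    intro x
    rw [PsiF_apply, PsiF_apply, Algebra.trace_trace]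
  have h4 : gaussSum (χ * etaC F) (PsiF p ψ F) = gaussSum χ (PsiF p ψ F) := by
    rw [hχη]
    unfold gaussSum
    refine Fintype.sum_bijective (FiniteField.frobeniusAlgEquivOfAlgebraic K F)
      (FiniteField.frobeniusAlgEquivOfAlgebraic K F).bijective _ _ ?_
    intro x
    rw [htr, htr, Algebra.trace_eq_of_algEquiv, FiniteField.coe_frobeniusAlgEquivOfAlgebraic,
      hcK, map_pow, MulChar.pow_apply' _ hQ0]
  have hdup := gauss_dup hF χ hχ1 hχ2 h3 _ hprim h4
  -- the descended character
  obtain ⟨m, -, hm⟩ := Nat.exists_mul_mod_eq_one_of_coprime (n := (Q + 1) / 2) (k := 2 ^ (n + 3))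
    (Nat.Coprime.pow_right _ (Nat.coprime_two_right.mpr (by rw [Nat.odd_iff]; omega)))
    (Nat.one_lt_pow (by omega) (by omega))
  have hm0 : m ≠ 0 := by rintro rfl; simp at hm
  have hχm : χ ^ ((Q + 1) * m) = χ ^ 2 := by
    have e : (Q + 1) * m = ((Q + 1) / 2 * m) * 2 := by
      have : Q + 1 = (Q + 1) / 2 * 2 := by omega
      conv_lhs => rw [this]
      ring
    rw [e, pow_mul, ← pow_mod_orderOf χ, hχ, hm, pow_one]
  set χ' : MulChar K ℂ := resChar χ ^ m with hχ'
  have hθ : ∀ (x : F) (c : K), algebraMap K F c = x ^ (Fintype.card K + 1) →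
      (χ ^ 2) x = χ' c := by
    intro x c h
    rw [← hχm, hχ', MulChar.pow_apply' _ hm0, resChar_apply, h, hcK,
      MulChar.pow_apply' _ (by positivity), map_pow, pow_mul]
  have hord : orderOf χ' = 2 ^ (n + 2) := by
    apply orderOf_eq_prime_pow
    · intro h
      apply hχne (2 * 2 ^ (n + 1))
      · intro hd
        have := Nat.le_of_dvd (by positivity) hd
        have h5 : 0 < 2 ^ n := by positivity
        simp only [pow_succ] at this
        omega
      · rw [pow_mul]
        ext x
        rw [MulChar.pow_apply_coe, MulChar.one_apply_coe]
        have hx := FiniteField.algebraMap_norm_eq_pow_sum K F (x : F)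
        have hfr : Module.finrank K F = 2 := by
          have := Module.card_eq_pow_finrank (K := K) (V := F)
          rw [hcFQ, hcK] at this
          exact (Nat.pow_right_injective (hcK ▸ Fintype.one_lt_card (α := K)) this).symm
        rw [hfr, Nat.card_eq_fintype_card] at hx
        simp only [Finset.sum_range_succ, Finset.sum_range_zero, pow_zero, pow_one, zero_add] at hx
        rw [add_comm] at hx
        rw [hθ _ _ hx, ← MulChar.pow_apply' _ (by positivity), h]
        apply MulChar.one_apply
        rw [isUnit_iff_ne_zero]
        intro h0
        rw [h0, map_zero] at hx
        exact (pow_ne_zero _ x.ne_zero) hx.symm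
    · ext c
      rw [MulChar.pow_apply_coe, MulChar.one_apply_coe, hχ', MulChar.pow_apply_coe, resChar_apply,
        ← pow_mul, mul_comm, pow_mul]
      have hc0 : algebraMap K F c ≠ 0 := by simp
      suffices h : χ (algebraMap K F c) ^ 2 ^ (n + 2) = 1 by rw [h, one_pow]
      have e1 : χ (algebraMap K F c) ^ (Q - 1) = 1 := by
        rw [← map_pow, ← map_pow, ← hcK, FiniteField.pow_card_sub_one_eq_one _ c.ne_zero]; simp
      have e2 : χ (algebraMap K F c) ^ 2 ^ (n + 3) = 1 := by
        rw [← MulChar.pow_apply' _ (by positivity), ← hχ, pow_orderOf_eq_one]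
        exact MulChar.one_apply (isUnit_iff_ne_zero.mpr hc0)
      have d1 := orderOf_dvd_of_pow_eq_one e1
      have d2 := orderOf_dvd_of_pow_eq_one e2
      obtain ⟨k, hk, hk2⟩ := (Nat.dvd_prime_pow Nat.prime_two).mp d2
      rw [← orderOf_dvd_iff_pow_eq_one, hk2]
      apply pow_dvd_pow
      by_contra hlt
      have : k = n + 3 := by omega
      rw [hk2, this] at d1
      exact hndiv d1
  have hχ'1 : χ' ≠ 1 := by
    intro h
    rw [h, orderOf_one] at hord
    have : 2 ^ (n + 2) = 4 * 2 ^ n := by ring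
    omega
  have hHD := HD hK (by rw [hcFQ, hcK]) χ' hχ'1 (χ ^ 2) hθ (PsiF p ψ K) (PsiF p ψ F) htr
  obtain ⟨a, b, hab, hG⟩ := ih χ' hord
  rw [hG] at hHD
  have hsq : gaussSum (etaC F) (PsiF p ψ F) ^ 2 = ((p : ℂ) ^ 2 ^ n) ^ 2 := by
    rw [gaussSum_sq (etaC_ne_one hF) etaC_quad hprim, etaC_neg_one
      (by rw [hcFQ, Nat.pow_mod, hQ4]; norm_num), hcFQ, one_mul]
    push_cast; simp [hQ]
  have h4ne : (4 : F) ≠ 0 := by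
    have h2 := two_ne_zero_of hF
    rw [show (4 : F) = 2 * 2 by norm_num]; exact mul_ne_zero h2 h2
  have hχ4 : χ 4 ^ 4 = 1 := by
    have e1 : χ 4 ^ (p - 1) = 1 := by
      have h4' : (4 : ZMod p) ≠ 0 := by
        intro h
        apply h4ne
        have := congrArg (algebraMap (ZMod p) F) h
        rwa [map_ofNat, map_zero] at this
      have := congrArg (algebraMap (ZMod p) F) (ZMod.pow_card_sub_one_eq_one h4')
      rw [map_pow, map_ofNat, map_one] at this
      rw [← map_pow, this, map_one]
    have e2 : χ 4 ^ 2 ^ (n + 3) = 1 := by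
      rw [← MulChar.pow_apply' _ (by positivity), ← hχ, pow_orderOf_eq_one]
      exact MulChar.one_apply (isUnit_iff_ne_zero.mpr h4ne)
    have d1 := orderOf_dvd_of_pow_eq_one e1
    have d2 := orderOf_dvd_of_pow_eq_one e2
    obtain ⟨k, hk, hk2⟩ := (Nat.dvd_prime_pow Nat.prime_two).mp d2
    rw [← orderOf_dvd_iff_pow_eq_one, hk2]
    rw [hk2] at d1
    apply pow_dvd_pow (n := 2)
    by_contra hlt
    have : 2 ^ 3 ∣ 2 ^ k := pow_dvd_pow _ (by omega)
    have := this.trans d1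
    omega
  have hχ4ne : χ 4 ≠ 0 := by intro h; rw [h] at hχ4; norm_num at hχ4
  have hexp : (p : ℂ) ^ (2 ^ (n + 1) - 1) = (p : ℂ) ^ (2 ^ n - 1) * (p : ℂ) ^ 2 ^ n := by
    rw [← pow_add]; congr 1
    have : 0 < 2 ^ n := by positivity
    rw [pow_succ]; omega
  obtain ⟨δ, hδ, hδG⟩ : ∃ δ : ℂ, δ ^ 4 = 1 ∧
      gaussSum (etaC F) (PsiF p ψ F) = δ * (p : ℂ) ^ 2 ^ n := by
    rcases sq_eq_sq_iff_eq_or_eq_neg.mp hsq with h | h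
    · exact ⟨1, by norm_num, by rw [h]; ring⟩
    · exact ⟨-1, by norm_num, by rw [h]; ring⟩
  obtain ⟨a', b', hab', hu⟩ := unit_mul_gauss (-δ * (χ 4)⁻¹)
    (by rw [mul_pow, inv_pow, hχ4, neg_pow, hδ]; norm_num) a b
  refine ⟨a', b', by rw [hab', hab], ?_⟩
  rw [hHD, hδG] at hdup
  rw [hu, hexp]
  apply mul_right_cancel₀ hχ4ne
  rw [hdup]
  field_simp

theorem main_ind (p : ℕ) [Fact p.Prime] (hp8 : p % 8 = 5) (ψ : AddChar (ZMod p) ℂ) (hψ : ψ ≠ 1)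
    (n : ℕ) : ∀ (F : Type) [Field F] [Fintype F] [Algebra (ZMod p) F]
    (_ : Fintype.card F = p ^ 2 ^ n) (χ : MulChar F ℂ) (_ : orderOf χ = 2 ^ (n + 2)),
    ∃ a b : ℤ, a ^ 2 + b ^ 2 = (p : ℤ) ∧
      gaussSum χ (PsiF p ψ F) ^ 2 =
        (p : ℂ) ^ (2 ^ n - 1) * (Real.sqrt p : ℂ) * (a + b * I) := by
  induction n with
  | zero =>
    intro F _ _ _ hc χ hχ
    obtain ⟨a, b, h1, h2⟩ := main_base p hp8 ψ hψ (by simpa using hc) χ (by simpa using hχ)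
    exact ⟨a, b, h1, by rw [h2]; simp⟩
  | succ n ih =>
    intro F _ _ _ hc χ hχ
    letI : Fintype (GaloisField p (2 ^ n)) := Fintype.ofFinite _
    have hcK : Fintype.card (GaloisField p (2 ^ n)) = p ^ 2 ^ n := by
      rw [← Nat.card_eq_fintype_card, GaloisField.card p _ (by positivity)]
    have hfr : Module.finrank (ZMod p) F = 2 ^ (n + 1) := by
      have := FiniteField.pow_finrank_eq_card p F
      rw [hc] at this
      exact Nat.pow_right_injective (Fact.out : p.Prime).two_le this
    obtain ⟨g⟩ := FiniteField.nonempty_algHom_of_finrank_dvd (F := ZMod p)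
      (K := GaloisField p (2 ^ n)) (L := F)
      (by rw [hfr, GaloisField.finrank p (by positivity)]; exact pow_dvd_pow _ (by omega))
    letI : Algebra (GaloisField p (2 ^ n)) F := g.toRingHom.toAlgebra
    haveI : IsScalarTower (ZMod p) (GaloisField p (2 ^ n)) F :=
      IsScalarTower.of_algebraMap_eq (fun x => (g.commutes x).symm)
    exact main_step p hp8 ψ hψ n F (GaloisField p (2 ^ n)) hcK hc
      (fun χ h => ih _ hcK χ h) χ hχ

end aux

theorem statement7 (p r0 N f : ℕ) (hp : p.Prime) (hr0 : 3 ≤ r0) (hN : N = 2 ^ r0)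
    (hp8 : p % 8 = 5) (hNp : Nat.gcd N p = 1)
    (hf : orderOf (p : ZMod N) = f)
    (F : Type) [Field F] [Fintype F] [Algebra (ZMod p) F]
    (hcard : Fintype.card F = p ^ f)
    (χ : MulChar F ℂ) (hχord : orderOf χ = N) :
    ∃ ε : ℂ, (ε = 1 ∨ ε = -1) ∧
      ∃ a b : ℤ, a ^ 2 + b ^ 2 = (p : ℤ) ∧
        (gaussSumN p χ 1) ^ 2 =
          ε * (p : ℂ) ^ ((2 ^ (r0 - 2) - 1 : ℕ)) * (Real.sqrt p : ℂ) *
            ((a : ℂ) + (b : ℂ) * Complex.I) := by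
  haveI : Fact p.Prime := ⟨hp⟩
  obtain ⟨n, rfl⟩ : ∃ n, r0 = n + 2 := ⟨r0 - 2, by omega⟩
  subst hN
  rw [order_p p n hp8] at hf
  subst hf
  have hprim : IsPrimitiveRoot (zetaP p) p := Complex.isPrimitiveRoot_exp p hp.ne_zero
  have hψ : AddChar.zmodChar p hprim.pow_eq_one ≠ 1 := by
    rw [AddChar.zmod_char_ne_one_iff]
    have h1 : AddChar.zmodChar p hprim.pow_eq_one 1 = zetaP p := by
      have := AddChar.zmodChar_apply' hprim.pow_eq_one 1
      simpa using this
    rw [h1]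
    exact hprim.ne_one hp.one_lt
  obtain ⟨a, b, hab, hG⟩ := main_ind p hp8 _ hψ n F hcard χ hχord
  refine ⟨1, Or.inl rfl, a, b, hab, ?_⟩
  have hgs : gaussSumN p χ 1 = gaussSum χ (PsiF p (AddChar.zmodChar p hprim.pow_eq_one) F) := by
    unfold gaussSumN gaussSum
    rw [Finset.sum_filter]
    refine Finset.sum_congr rfl fun x _ => ?_
    rw [PsiF_apply, AddChar.zmodChar_apply, pow_one]
    split_ifs with h
    · rfl
    · rw [not_not] at h
      rw [h, MulChar.map_zero, zero_mul]
  rw [hgs, hG, one_mul, Nat.add_sub_cancel]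
end
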